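/- Suppose α_1 = 1, 0 ≤ α_t < 1 for all t > 1, and let q ∈ (0,1). Then the stochastic AMP iterates (with arbitrary perturbation vectors Δ_G^t, Δ_H^{2t−1}, Δ_H^{2t} ∈ E*) satisfy, for every t ≥ 1 and every u ∈ Z: (1/Γ_t) Q(w_{t+1}^{ag}, u) ≤ B_t(u, r_{[t]}) − Σ_{i=1}^t (α_i/(2Γ_i γ_i)) (qμ − L_G α_i γ_i − 3L_H² γ_i²/μ) ‖r_i − w_{i+1}‖² + Σ_{i=1}^t Λ_i(u), where Λ_i(u) := (3α_iγ_i/(2μΓ_i))(‖Δ_H^{2i}‖_*² + ‖Δ_H^{2i−1}‖_*²) − ((1−q)μα_i/(2Γ_iγ_i))‖r_i − w_{i+1}‖² − (α_i/Γ_i)⟨Δ_H^{2i} + Δ_G^i, w_{i+1} − u⟩. -/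

import Mathlib

theorem amp_prox {E : Type*} [NormedAddCommGroup E] [NormedSpace ℝ E]
    (Z : Set E) (hZcv : Convex ℝ Z)
    (ω : E → ℝ) (Dω : E → E →L[ℝ] ℝ)
    (hωdiff : ∀ z ∈ Z, HasFDerivWithinAt ω (Dω z) Z z)
    (V : E → E → ℝ) (hV : ∀ z u, V z u = ω u - ω z - Dω z (u - z))
    (J : E → ℝ) (hJ : ConvexOn ℝ Z J) (γ : ℝ) (hγ : 0 < γ)
    (η : E →L[ℝ] ℝ) (z p : E) (hp : p ∈ Z)
    (hmin : IsMinOn (fun u => η (u - z) + V z u + γ * J u) Z p)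
    (u : E) (hu : u ∈ Z) :
    η (p - u) + γ * J p - γ * J u ≤ V z u - V z p - V p u := by
  have hmem : ∀ s ∈ Set.Icc (0:ℝ) 1, p + s • (u - p) ∈ Z := fun s hs =>
    hZcv.add_smul_sub_mem hp hu hs
  have hline : HasDerivWithinAt (fun s : ℝ => p + s • (u - p)) (u - p) (Set.Icc 0 1) 0 := by
    have := ((hasDerivAt_id (0:ℝ)).smul_const (u - p)).const_add p
    simpa using this.hasDerivWithinAt
  have hωd : HasDerivWithinAt (fun s : ℝ => ω (p + s • (u - p))) (Dω p (u - p))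
      (Set.Icc 0 1) 0 := by
    have h0 : HasFDerivWithinAt ω (Dω p) Z (p + (0:ℝ) • (u - p)) := by
      simpa using hωdiff p hp
    exact h0.comp_hasDerivWithinAt (0:ℝ) hline hmem
  have hd := (hωd.sub_const (ω p)).add (((hasDerivAt_id (0:ℝ)).mul_const
    (η (u - p) - Dω z (u - p) + γ * (J u - J p))).hasDerivWithinAt (s := Set.Icc 0 1))
  have hloc : IsLocalMinOn (fun s : ℝ => (ω (p + s • (u - p)) - ω p) +
      s * (η (u - p) - Dω z (u - p) + γ * (J u - J p))) (Set.Icc 0 1) 0 := by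
    apply IsMinOn.localize
    intro s hs
    have h1 := hmin (hmem s hs)
    have h2 : J (p + s • (u - p)) ≤ J p + s * (J u - J p) := by
      have := hJ.2 hp hu (sub_nonneg.2 hs.2) hs.1 (by ring)
      have e : (1 - s) • p + s • u = p + s • (u - p) := by module
      rw [e] at this
      simp only [smul_eq_mul] at this
      linarith
    have h3 := mul_le_mul_of_nonneg_left h2 hγ.le
    simp only [Set.mem_setOf_eq, hV, map_sub, map_add, map_smul, smul_eq_mul] at h1 ⊢
    simp only [zero_smul, add_zero, zero_mul]
    linarith
  have hnn := hloc.hasFDerivWithinAt_nonneg hd.hasFDerivWithinAt (y := 1)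
    (mem_posTangentConeAt_of_segment_subset (by simp [segment_eq_Icc]))
  simp at hnn
  simp only [hV, map_sub] at hnn ⊢
  linarith

theorem amp_young (μ γ L N1 N2 a b c : ℝ) (hμ : 0 < μ) (hc : c ≤ (L * a + N1 + N2) * b) (hγ : 0 < γ) :
    γ * c ≤ μ / 2 * b ^ 2 + 3 * γ ^ 2 / (2 * μ) * (L ^ 2 * a ^ 2 + N1 ^ 2 + N2 ^ 2) := by
  have h1 := mul_le_mul_of_nonneg_left hc hγ.le
  refine h1.trans ?_
  have h2 : (L * a + N1 + N2) ^ 2 ≤ 3 * (L ^ 2 * a ^ 2 + N1 ^ 2 + N2 ^ 2) := by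
    nlinarith [sq_nonneg (L * a - N1), sq_nonneg (L * a - N2), sq_nonneg (N1 - N2)]
  have h3 : γ * ((L * a + N1 + N2) * b) ≤ μ / 2 * b ^ 2 + γ ^ 2 / (2 * μ) * (L * a + N1 + N2) ^ 2 := by
    have : 0 ≤ (μ * b - γ * (L * a + N1 + N2)) ^ 2 / (2 * μ) := by positivity
    have e : (μ * b - γ * (L * a + N1 + N2)) ^ 2 / (2 * μ) = μ / 2 * b ^ 2
      + γ ^ 2 / (2 * μ) * (L * a + N1 + N2) ^ 2 - γ * ((L * a + N1 + N2) * b) := by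
      field_simp
      ring
    linarith
  have h4 := mul_le_mul_of_nonneg_left h2 (show 0 ≤ γ ^ 2 / (2 * μ) by positivity)
  have e : 3 * γ ^ 2 / (2 * μ) * (L ^ 2 * a ^ 2 + N1 ^ 2 + N2 ^ 2) =
    γ ^ 2 / (2 * μ) * (3 * (L ^ 2 * a ^ 2 + N1 ^ 2 + N2 ^ 2)) := by ring
  linarith

open Finset in
/-- the master bound on `Q` for the stochastic AMP method. -/
theorem stochastic_amp_master_Q_bound
    {E : Type*} [NormedAddCommGroup E] [NormedSpace ℝ E] [FiniteDimensional ℝ E]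
    (Z : Set E) (hZne : Z.Nonempty) (hZcl : IsClosed Z) (hZcv : Convex ℝ Z)
    (μ : ℝ) (hμ : 0 < μ)
    (ω : E → ℝ) (Dω : E → E →L[ℝ] ℝ)
    (hωdiff : ∀ z ∈ Z, HasFDerivWithinAt ω (Dω z) Z z)
    (hωcont : ContinuousOn Dω Z)
    (hωsc : StrongConvexOn Z μ ω)
    (V : E → E → ℝ) (hV : ∀ z u, V z u = ω u - ω z - Dω z (u - z))
    (hVlb : ∀ z ∈ Z, ∀ u ∈ Z, μ / 2 * ‖u - z‖ ^ 2 ≤ V z u)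
    (J : E → ℝ) (hJ : ConvexOn ℝ Z J)
    (G : E → ℝ) (DG : E → E →L[ℝ] ℝ) (LG : ℝ) (hLG : 0 ≤ LG)
    (hGsmooth : ∀ v ∈ Z, ∀ x ∈ Z, G v ≤ G x + DG x (v - x) + LG / 2 * ‖v - x‖ ^ 2)
    (hGcvx : ∀ v ∈ Z, ∀ x ∈ Z, G x + DG x (v - x) ≤ G v)
    (H : E → E →L[ℝ] ℝ) (LH : ℝ) (hLH : 0 ≤ LH)
    (hHmono : ∀ v ∈ Z, ∀ x ∈ Z, 0 ≤ (H x - H v) (x - v))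
    (hHlip : ∀ v ∈ Z, ∀ x ∈ Z, ‖H x - H v‖ ≤ LH * ‖x - v‖)
    (Q : E → E → ℝ)
    (hQ : ∀ a b, Q a b = G a - G b + (H b) (a - b) + J a - J b)
    (α γ : ℕ → ℝ) (hαrange : ∀ t ≥ 1, 0 ≤ α t ∧ α t ≤ 1) (hγpos : ∀ t ≥ 1, 0 < γ t)
    (r w wag wmd : ℕ → E)
    (hr1Z : r 1 ∈ Z) (hw1 : w 1 = r 1) (hwag1 : wag 1 = r 1)
    (hwmd : ∀ t ≥ 1, wmd t = (1 - α t) • wag t + α t • r t)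
    (ΔG ΔH : ℕ → E →L[ℝ] ℝ)
    (hwprox : ∀ t ≥ 1, w (t+1) ∈ Z ∧ IsMinOn
      (fun u => (γ t • (H (r t) + ΔH (2*t-1) + (DG (wmd t) + ΔG t))) (u - r t)
        + V (r t) u + γ t * J u) Z (w (t+1)))
    (hrprox : ∀ t ≥ 1, r (t+1) ∈ Z ∧ IsMinOn
      (fun u => (γ t • (H (w (t+1)) + ΔH (2*t) + (DG (wmd t) + ΔG t))) (u - r t)
        + V (r t) u + γ t * J u) Z (r (t+1)))
    (hwagrec : ∀ t ≥ 1, wag (t+1) = (1 - α t) • wag t + α t • w (t+1))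
    (Γ : ℕ → ℝ) (hΓ1 : Γ 1 = 1) (hΓrec : ∀ t ≥ 2, Γ t = (1 - α t) * Γ (t-1))
    (hα1 : α 1 = 1) (hαlt1 : ∀ t ≥ 2, α t < 1)
    (q : ℝ) (hq : 0 < q ∧ q < 1) :
    ∀ t ≥ 1, ∀ u ∈ Z,
      1 / Γ t * Q (wag (t+1)) u ≤
        (∑ i ∈ Finset.Icc 1 t, α i / (Γ i * γ i) * (V (r i) u - V (r (i+1)) u))
          - (∑ i ∈ Finset.Icc 1 t,
              α i / (2 * Γ i * γ i) * (q * μ - LG * α i * γ i - 3 * LH ^ 2 * γ i ^ 2 / μ)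
                * ‖r i - w (i+1)‖ ^ 2)
          + ∑ i ∈ Finset.Icc 1 t,
              (3 * α i * γ i / (2 * μ * Γ i) * (‖ΔH (2*i)‖ ^ 2 + ‖ΔH (2*i-1)‖ ^ 2)
                - (1 - q) * μ * α i / (2 * Γ i * γ i) * ‖r i - w (i+1)‖ ^ 2
                - α i / Γ i * ((ΔH (2*i) + ΔG i) (w (i+1) - u))) := by
  intro t ht u hu
  have hrZ : ∀ t ≥ 1, r t ∈ Z := by
    intro t ht
    rcases Nat.exists_eq_add_of_le' ht with ⟨k, rfl⟩
    rcases k with _ | k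
    · exact hr1Z
    · exact (hrprox (k+1) (by omega)).1
  have hagZ : ∀ t ≥ 1, wag t ∈ Z := by
    intro t ht
    induction t, ht using Nat.le_induction with
    | base => rw [hwag1]; exact hr1Z
    | succ n hn ih =>
      rw [hwagrec n hn]
      exact hZcv ih (hwprox n hn).1 (by linarith [(hαrange n hn).2]) (hαrange n hn).1 (by ring)
  have hmdZ : ∀ t ≥ 1, wmd t ∈ Z := by
    intro t ht
    rw [hwmd t ht]
    exact hZcv (hagZ t ht) (hrZ t ht) (by linarith [(hαrange t ht).2]) (hαrange t ht).1 (by ring)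
  have hΓpos : ∀ t ≥ 1, 0 < Γ t := by
    intro t ht
    induction t, ht using Nat.le_induction with
    | base => rw [hΓ1]; norm_num
    | succ n hn ih =>
      rw [hΓrec (n+1) (by omega)]
      exact mul_pos (by linarith [hαlt1 (n+1) (by omega)]) (by simpa using ih)
  -- one-step bound
  have step1 : ∀ i ≥ 1, γ i * ((H (w (i+1)) + ΔH (2*i) + (DG (wmd i) + ΔG i)) (w (i+1) - u)
        + J (w (i+1)) - J u) ≤ V (r i) u - V (r (i+1)) u
        - μ / 2 * ‖r i - w (i+1)‖ ^ 2
        + 3 * γ i ^ 2 / (2 * μ) * (LH ^ 2 * ‖r i - w (i+1)‖ ^ 2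
          + ‖ΔH (2*i)‖ ^ 2 + ‖ΔH (2*i-1)‖ ^ 2) := by
    intro i hi
    obtain ⟨hw, hwm⟩ := hwprox i hi
    obtain ⟨hr, hrm⟩ := hrprox i hi
    have h1 := amp_prox Z hZcv ω Dω hωdiff V hV J hJ (γ i) (hγpos i hi) _ _ _ hw hwm _ hr
    have h2 := amp_prox Z hZcv ω Dω hωdiff V hV J hJ (γ i) (hγpos i hi) _ _ _ hr hrm u hu
    have h3 := hVlb _ (hrZ i hi) _ hw
    have h4 := hVlb _ hw _ hr
    have h5 : (H (w (i+1)) - H (r i) + ΔH (2*i) - ΔH (2*i-1)) (w (i+1) - r (i+1)) ≤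
        (LH * ‖r i - w (i+1)‖ + ‖ΔH (2*i)‖ + ‖ΔH (2*i-1)‖) * ‖r (i+1) - w (i+1)‖ := by
      refine (Real.le_norm_self _).trans ((ContinuousLinearMap.le_opNorm _ _).trans ?_)
      rw [norm_sub_rev (w (i+1)) (r (i+1))]
      gcongr
      refine (norm_sub_le _ _).trans ?_
      gcongr
      refine (norm_add_le _ _).trans ?_
      gcongr
      rw [norm_sub_rev (r i)]
      exact hHlip _ (hrZ i hi) _ hw
    have h6 := amp_young μ (γ i) _ _ _ _ _ _ hμ h5 (hγpos i hi)
    rw [norm_sub_rev (w (i+1)) (r i)] at h3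
    simp only [ContinuousLinearMap.add_apply, ContinuousLinearMap.sub_apply,
      ContinuousLinearMap.smul_apply, smul_eq_mul, map_sub] at h1 h2 h6 ⊢
    linarith
  have step2 : ∀ i ≥ 1, Q (wag (i+1)) u ≤ (1 - α i) * Q (wag i) u
      + α i * ((DG (wmd i)) (w (i+1) - u) + H (w (i+1)) (w (i+1) - u) + J (w (i+1)) - J u)
      + LG / 2 * α i ^ 2 * ‖r i - w (i+1)‖ ^ 2 := by
    intro i hi
    obtain ⟨ha0, ha1⟩ := hαrange i hi
    have hb : 0 ≤ 1 - α i := by linarith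
    have hw := (hwprox i hi).1
    have e1 : wag (i+1) - wmd i = α i • (w (i+1) - r i) := by
      rw [hwagrec i hi, hwmd i hi]; module
    have g1 := hGsmooth _ (hagZ (i+1) (by omega)) _ (hmdZ i hi)
    have e2 : ‖wag (i+1) - wmd i‖ ^ 2 = α i ^ 2 * ‖r i - w (i+1)‖ ^ 2 := by
      rw [e1, norm_smul, mul_pow, norm_sub_rev]; simp
    rw [e2] at g1
    have g2 := mul_le_mul_of_nonneg_left (hGcvx _ (hagZ i hi) _ (hmdZ i hi)) hb
    have g3 := mul_le_mul_of_nonneg_left (hGcvx _ hu _ (hmdZ i hi)) ha0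
    have m := mul_le_mul_of_nonneg_left (hHmono _ hu _ hw) ha0
    have j := hJ.2 (hagZ i hi) hw hb ha0 (by ring)
    rw [← hwagrec i hi] at j
    have d : ∀ f : E →L[ℝ] ℝ, f (wag (i+1)) = (1 - α i) * f (wag i) + α i * f (w (i+1)) := by
      intro f; rw [hwagrec i hi]; simp
    simp only [hQ]
    simp only [ContinuousLinearMap.sub_apply, smul_eq_mul, map_sub, d] at g1 g2 g3 m j ⊢
    linarith
  have step : ∀ i ≥ 1, 1 / Γ i * Q (wag (i+1)) u ≤ (1 - α i) / Γ i * Q (wag i) u +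
      (α i / (Γ i * γ i) * (V (r i) u - V (r (i+1)) u)
       - α i / (2 * Γ i * γ i) * (q * μ - LG * α i * γ i - 3 * LH ^ 2 * γ i ^ 2 / μ)
                * ‖r i - w (i+1)‖ ^ 2
       + (3 * α i * γ i / (2 * μ * Γ i) * (‖ΔH (2*i)‖ ^ 2 + ‖ΔH (2*i-1)‖ ^ 2)
                - (1 - q) * μ * α i / (2 * Γ i * γ i) * ‖r i - w (i+1)‖ ^ 2
                - α i / Γ i * ((ΔH (2*i) + ΔG i) (w (i+1) - u)))) := by
    intro i hi
    have hΓ := hΓpos i hi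
    have hγ := hγpos i hi
    have s1 := mul_le_mul_of_nonneg_left (step1 i hi)
      (show 0 ≤ α i / (Γ i * γ i) from div_nonneg (hαrange i hi).1 (by positivity))
    have s2 := mul_le_mul_of_nonneg_left (step2 i hi) (show 0 ≤ 1 / Γ i by positivity)
    simp only [ContinuousLinearMap.add_apply] at s1 s2 ⊢
    generalize ‖r i - w (i+1)‖ = a at *
    generalize ‖ΔH (2*i)‖ = n1 at *
    generalize ‖ΔH (2*i-1)‖ = n2 at *
    generalize V (r i) u - V (r (i+1)) u = v at *
    generalize H (w (i+1)) (w (i+1) - u) = x1 at *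
    generalize ΔH (2*i) (w (i+1) - u) = x2 at *
    generalize DG (wmd i) (w (i+1) - u) = x3 at *
    generalize ΔG i (w (i+1) - u) = x4 at *
    generalize Q (wag i) u = q0 at *
    generalize J (w (i+1)) = j1 at *
    refine s2.trans ?_
    rw [← sub_nonneg] at s1 ⊢
    refine s1.trans_eq ?_
    field_simp
    ring
  induction t, ht using Nat.le_induction with
  | base =>
    have := step 1 le_rfl
    simp only [hα1, sub_self, zero_div, zero_mul, zero_add] at this
    simpa [hα1] using this
  | succ n hn ih =>
    have s := step (n+1) (by omega)
    have e : (1 - α (n+1)) / Γ (n+1) = 1 / Γ n := by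
      have h1 := hΓrec (n+1) (by omega)
      simp only [Nat.add_sub_cancel] at h1
      have h2 := hΓpos n hn
      have h3 : 0 < 1 - α (n+1) := by linarith [hαlt1 (n+1) (by omega)]
      rw [h1]; field_simp
    rw [e] at s
    rw [Finset.sum_Icc_succ_top (by omega), Finset.sum_Icc_succ_top (by omega),
      Finset.sum_Icc_succ_top (by omega)]
    linarith
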